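/- arXiv:1909.00547 — 6 statements merged into one kernel-verified Lean document; each statement's English description precedes it below -/
import Mathlib

section
/- For every n ≥ 1 and every natural number t, the following identity of ℂ-linear endomorphisms of the polynomial ring ℂ[x_1,…,x_n] holds: ∏_{j=0}^{t} (E + (n+j)·id) = Σ_{u ∈ ℕ^n, u_1+⋯+u_n = t+1} ((t+1)!/(u_1!⋯u_n!)) · ∂^u ∘ μ_{x^u}, where E = Σ_{i=1}^{n} μ_{x_i} ∘ ∂_i is the Euler operator, ∂^u = ∂_1^{u_1} ∘ ⋯ ∘ ∂_n^{u_n}, μ_p denotes the operator of multiplication by the polynomial p, and x^u = x_1^{u_1}⋯x_n^{u_n}. (The factors E + (n+j)·id on the left commute with each other, so the order of the product is irrelevant.) -/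
open MvPolynomial

/-- The multiplication operator `μ_p` on `ℂ[x_1,…,x_n]`. -/
noncomputable def mulOp (n : ℕ) (p : MvPolynomial (Fin n) ℂ) :
    Module.End ℂ (MvPolynomial (Fin n) ℂ) :=
  LinearMap.mulLeft ℂ p

/-- The `i`-th formal partial derivative `∂_i` as a `ℂ`-linear endomorphism. -/
noncomputable def pdOp (n : ℕ) (i : Fin n) :
    Module.End ℂ (MvPolynomial (Fin n) ℂ) :=
  (pderiv i).toLinearMap

/-- `∂^u = ∂_1^{u_1} ∘ ⋯ ∘ ∂_n^{u_n}`. -/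
noncomputable def partialPow (n : ℕ) (u : Fin n → ℕ) :
    Module.End ℂ (MvPolynomial (Fin n) ℂ) :=
  (List.ofFn fun i => pdOp n i ^ u i).prod

/-- The Euler operator `E = Σ_i μ_{x_i} ∘ ∂_i`. -/
noncomputable def eulerOp (n : ℕ) : Module.End ℂ (MvPolynomial (Fin n) ℂ) :=
  ∑ i : Fin n, mulOp n (X i) * pdOp n i

/-!
Both sides are diagonal in the monomial basis. The Euler operator scales `x ^ a` by `∑ a_i`, so the
left side scales it by the rising factorial of `∑ (a_i + 1)`, while `∂ ^ u ∘ μ_{x ^ u}` scales it by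
the product of the rising factorials of the `a_i + 1`. Equality of the eigenvalues is the
multinomial Vandermonde identity for rising factorials, obtained by comparing coefficients in
`∏ (1 - X) ^ (-x_i) = (1 - X) ^ (-∑ x_i)`.
-/

section Vandermonde

open Finset

theorem sum_finsuppAntidiag_eq_sum_piAntidiag {ι μ M : Type*} [DecidableEq ι]
    [AddCommMonoid μ] [HasAntidiagonal μ] [DecidableEq μ] [AddCommMonoid M]
    (s : Finset ι) (m : μ) (f : (ι → μ) → M) :
    ∑ l ∈ s.finsuppAntidiag m, f l = ∑ u ∈ s.piAntidiag m, f u := by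
  rw [finsuppAntidiag, sum_map]
  exact sum_attach (s.piAntidiag m) f

theorem coeff_mk_one_pow (R : Type*) [CommSemiring R] (d k : ℕ) :
    PowerSeries.coeff k ((PowerSeries.mk 1 : PowerSeries R) ^ d) = (d.multichoose k : R) := by
  rw [← Fin.prod_const, PowerSeries.coeff_prod]
  simp [card_finsuppAntidiag_nat_eq_multichoose]

variable {ι : Type*} [DecidableEq ι] (s : Finset ι) (x : ι → ℕ) (m : ℕ)

theorem sum_piAntidiag_prod_multichoose :
    ∑ u ∈ s.piAntidiag m, ∏ i ∈ s, (x i).multichoose (u i) = (∑ i ∈ s, x i).multichoose m := by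
  have coeff_eq := congrArg (PowerSeries.coeff m)
    (prod_pow_eq_pow_sum s x (PowerSeries.mk 1 : PowerSeries ℕ))
  simpa only [PowerSeries.coeff_prod, coeff_mk_one_pow, Nat.cast_id,
    sum_finsuppAntidiag_eq_sum_piAntidiag s m fun u ↦ ∏ i ∈ s, (x i).multichoose (u i)]
    using coeff_eq

theorem ascFactorial_eq_factorial_mul_multichoose (d k : ℕ) :
    d.ascFactorial k = k.factorial * d.multichoose k := by
  rw [Nat.ascFactorial_eq_factorial_mul_choose', Nat.multichoose_eq]

theorem sum_piAntidiag_multinomial_mul_prod_ascFactorial :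
    ∑ u ∈ s.piAntidiag m, Nat.multinomial s u * ∏ i ∈ s, (x i).ascFactorial (u i) =
      (∑ i ∈ s, x i).ascFactorial m := by
  simp only [ascFactorial_eq_factorial_mul_multichoose, prod_mul_distrib]
  rw [← sum_piAntidiag_prod_multichoose, mul_sum]
  refine sum_congr rfl fun u hu ↦ ?_
  rw [← (mem_piAntidiag.1 hu).1, ← Nat.multinomial_spec]
  ring

end Vandermonde

section Operators

variable (R : Type*) {σ : Type*} [CommSemiring R]

/-- The partial derivative `∂_i`, as an element of the endomorphism ring in which operators are
multiplied. -/
noncomputable abbrev pderivEnd (i : σ) : Module.End R (MvPolynomial σ R) :=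
  (pderiv i).toLinearMap

theorem commute_pderivEnd (i j : σ) : Commute (pderivEnd R i) (pderivEnd R j) := by
  obtain rfl | hij := eq_or_ne i j
  · exact Commute.refl _
  · refine MvPolynomial.linearMap_ext fun a ↦ LinearMap.ext_ring ?_
    simp [hij, hij.symm, tsub_right_comm, mul_comm]

theorem pairwise_commute_pderivEnd_pow (s : Set σ) (u : σ → ℕ) :
    s.Pairwise (Function.onFun Commute fun i ↦ pderivEnd R i ^ u i) :=
  fun i _ j _ _ ↦ (commute_pderivEnd R i j).pow_pow (u i) (u j)

variable {R}

theorem pderivEnd_pow_monomial (i : σ) (k : ℕ) (a : σ →₀ ℕ) (c : R) :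
    (pderivEnd R i ^ k) (monomial a c) =
      monomial (a - Finsupp.single i k) (c * (a i).descFactorial k) := by
  induction k with
  | zero => simp
  | succ k ih =>
    rw [pow_succ', Module.End.mul_apply, ih, Derivation.coeFn_coe, pderiv_monomial,
      tsub_tsub, ← Finsupp.single_add, Nat.descFactorial_succ]
    simp [mul_left_comm, mul_comm]

theorem noncommProd_pderivEnd_pow_monomial (s : Finset σ) (u : σ → ℕ) (a : σ →₀ ℕ) (c : R) :
    s.noncommProd (fun i ↦ pderivEnd R i ^ u i) (pairwise_commute_pderivEnd_pow R s u)
        (monomial a c) =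
      monomial (a - ∑ i ∈ s, Finsupp.single i (u i))
        (c * ((∏ i ∈ s, (a i).descFactorial (u i) : ℕ) : R)) := by
  classical
  induction s using Finset.induction_on with
  | empty => simp
  | insert i s hi ih =>
    have exponent_eq : (a - ∑ j ∈ s, Finsupp.single j (u j)) i = a i := by
      simp [Finsupp.single_apply, hi]
    rw [Finset.noncommProd_insert_of_notMem _ _ _ _ hi, Module.End.mul_apply, ih,
      pderivEnd_pow_monomial, exponent_eq, tsub_tsub, Finset.sum_insert hi, Finset.prod_insert hi,
      add_comm (Finsupp.single i (u i)), mul_comm ((a i).descFactorial (u i)), Nat.cast_mul,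
      mul_assoc]

variable [Fintype σ]

variable (R) in
/-- The mixed partial derivative `∂^u = ∏ i, ∂_i ^ u i`. The product is `Finset.noncommProd`, since
the index type carries no order and the endomorphism ring is not commutative. -/
noncomputable def iteratedPderiv (u : σ → ℕ) : Module.End R (MvPolynomial σ R) :=
  Finset.univ.noncommProd (fun i ↦ pderivEnd R i ^ u i) (pairwise_commute_pderivEnd_pow R _ u)

variable (R σ) in
/-- The Euler operator `∑ i, x_i ∂_i` on polynomials in finitely many variables over an arbitrary
commutative semiring. -/
noncomputable def eulerEnd : Module.End R (MvPolynomial σ R) :=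
  ∑ i, LinearMap.mulLeft R (X i) * pderivEnd R i

theorem iteratedPderiv_prod_X_pow_mul_monomial (u : σ → ℕ) (a : σ →₀ ℕ) (c : R) :
    iteratedPderiv R u ((∏ i, X i ^ u i) * monomial a c) =
      (∏ i, (a i + 1).ascFactorial (u i)) • monomial a c := by
  have mul_monomial : (∏ i, X i ^ u i) * monomial a c =
      monomial (a + ∑ i, Finsupp.single i (u i)) c := by
    simp_rw [X_pow_eq_monomial]
    rw [← monomial_sum_one, monomial_mul, add_comm, one_mul]
  rw [mul_monomial, iteratedPderiv, noncommProd_pderivEnd_pow_monomial, add_tsub_cancel_right,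
    smul_monomial, nsmul_eq_mul, mul_comm c, Finsupp.coe_add, Finsupp.coe_univ_sum_single]
  simp only [Pi.add_apply, Nat.add_descFactorial_eq_ascFactorial]

theorem eulerEnd_monomial (a : σ →₀ ℕ) (c : R) :
    eulerEnd R σ (monomial a c) = (∑ i, a i) • monomial a c := by
  simp only [eulerEnd, LinearMap.sum_apply, Finset.sum_smul]
  exact Finset.sum_congr rfl fun i _ ↦ X_mul_pderiv_monomial

theorem prod_eulerEnd_add_nsmul_one_monomial (d m : ℕ) (a : σ →₀ ℕ) (c : R) :
    ((List.range m).map fun j ↦ eulerEnd R σ + (d + j) • 1).prod (monomial a c) =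
      (∑ i, a i + d).ascFactorial m • monomial a c := by
  induction m with
  | zero => simp
  | succ m ih =>
    have factor_monomial : (eulerEnd R σ + (d + m) • 1) (monomial a c) =
        (∑ i, a i + d + m) • monomial a c := by
      rw [LinearMap.add_apply, eulerEnd_monomial, LinearMap.smul_apply, Module.End.one_apply,
        ← add_smul, add_assoc]
    rw [List.range_succ, List.map_append, List.prod_append, List.map_singleton,
      List.prod_singleton, Module.End.mul_apply, factor_monomial, map_nsmul, ih, smul_smul,
      Nat.ascFactorial_succ]

variable (R σ) in
theorem euler_product_formula_general [DecidableEq σ] (m : ℕ) :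
    ((List.range m).map fun j ↦ eulerEnd R σ + (Fintype.card σ + j) • 1).prod =
      ∑ u ∈ Finset.univ.piAntidiag m, Nat.multinomial Finset.univ u •
        (iteratedPderiv R u * LinearMap.mulLeft R (∏ i, X i ^ u i)) := by
  refine MvPolynomial.linearMap_ext fun a ↦ LinearMap.ext fun c ↦ ?_
  have eigenvalue_eq := sum_piAntidiag_multinomial_mul_prod_ascFactorial
    Finset.univ (fun i ↦ a i + 1) m
  rw [Finset.sum_add_distrib, Finset.sum_const, Finset.card_univ, smul_eq_mul, mul_one]
    at eigenvalue_eq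
  simp only [LinearMap.comp_apply, prod_eulerEnd_add_nsmul_one_monomial, LinearMap.sum_apply,
    LinearMap.smul_apply, Module.End.mul_apply, LinearMap.mulLeft_apply,
    iteratedPderiv_prod_X_pow_mul_monomial, ← mul_smul, ← Finset.sum_smul, eigenvalue_eq]

end Operators

theorem partialPow_eq_iteratedPderiv (n : ℕ) (u : Fin n → ℕ) :
    partialPow n u = iteratedPderiv ℂ u := by
  rw [partialPow, List.ofFn_eq_map, iteratedPderiv,
    Finset.noncommProd_congr (List.toFinset_finRange n).symm fun _ _ ↦ rfl]
  exact (Finset.noncommProd_toFinset (List.finRange n) _ _ (List.nodup_finRange n)).symm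

theorem eulerOp_eq_eulerEnd (n : ℕ) : eulerOp n = eulerEnd ℂ (Fin n) := rfl

/-- `∏_{j=0}^{t} (E + (n+j)·id)
      = Σ_{u ∈ ℕ^n, u_1+⋯+u_n = t+1} ((t+1)!/(u_1!⋯u_n!)) · ∂^u ∘ μ_{x^u}`. -/
theorem euler_product_formula (n t : ℕ) (hn : 1 ≤ n) :
    ((List.range (t + 1)).map fun j =>
        eulerOp n + ((n + j : ℕ) : ℂ) • (1 : Module.End ℂ (MvPolynomial (Fin n) ℂ))).prod =
      ∑ u ∈ Finset.Nat.antidiagonalTuple n (t + 1),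
        (Nat.multinomial Finset.univ u : ℂ) •
          (partialPow n u * mulOp n (∏ i : Fin n, X i ^ u i)) := by
  simpa only [eulerOp_eq_eulerEnd, partialPow_eq_iteratedPderiv, mulOp, Nat.cast_smul_eq_nsmul,
    Finset.piAntidiag_univ_fin_eq_antidiagonalTuple, Fintype.card_fin]
    using euler_product_formula_general ℂ (Fin n) (t + 1)
end

section
/- Let n, d ≥ 1 and let l_1,…,l_d ∈ ℂ[x_1,…,x_n] be nonzero homogeneous linear forms (not necessarily distinct) whose only common zero in ℂ^n is the origin. Call a linear subspace X ⊆ ℂ^n an edge if X = ⋂_{j∈J} ker(l_j) for some subset J ⊆ {1,…,d}, and for an edge X set J(X) = { j : X ⊆ ker(l_j) }. Let Γ be the ideal of ℂ[x_1,…,x_n] generated by the polynomials ∏_{k ∉ J(X)} l_k, where X ranges over all edges with dim_ℂ X = 1, and let 𝔪 = (x_1,…,x_n). Then there exists a positive integer k such that 𝔪^k ⊆ Γ. -/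
open MvPolynomial

/-!
It suffices to show that every prime ideal `P ⊇ Γ` contains `𝔪`. Let `S` be the set of `j` with
`l j ∈ P`. If the forms `l j`, `j ∈ S`, had a nonzero common zero, then `S` would extend to some `J`
whose common zero set is a line `Y`; the generator of `Γ` attached to `Y` lies in `P`, so one of its
factors does, although every form in `P` vanishes on `Y`. Hence the forms in `P` have no nonzero
common zero, and by duality they span all linear forms.
-/

section LineEdges

variable {K V ι : Type*} [Field K] [AddCommGroup V] [Module K V] [Finite ι]

theorem exists_superset_finrank_iInf_ker_eq_one {φ : ι → Module.Dual K V}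
    (hφ : ⨅ j, LinearMap.ker (φ j) = ⊥) {S : Finset ι}
    (hS : ⨅ j ∈ S, LinearMap.ker (φ j) ≠ ⊥) :
    ∃ J, S ⊆ J ∧ Module.finrank K ↥(⨅ j ∈ J, LinearMap.ker (φ j)) = 1 := by
  classical
  obtain ⟨J, hSJ, hJ⟩ := Finite.exists_le_maximal
    (p := fun T : Finset ι => ⨅ j ∈ T, LinearMap.ker (φ j) ≠ ⊥) hS
  refine ⟨J, hSJ, ?_⟩
  set Y := ⨅ j ∈ J, LinearMap.ker (φ j)
  obtain ⟨m, hm⟩ : ∃ m, ¬ Y ≤ LinearMap.ker (φ m) := by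
    by_contra! h
    exact hJ.prop (le_bot_iff.mp (hφ ▸ le_iInf h))
  have hmJ : m ∉ J := fun h => hm (iInf₂_le m h)
  have hmY : LinearMap.ker (φ m) ⊓ Y = ⊥ := by
    rw [← Finset.iInf_insert m J fun j => LinearMap.ker (φ j)]
    by_contra h
    exact hmJ (hJ.le_of_ge h (Finset.subset_insert m J) (Finset.mem_insert_self m J))
  have hinj : Function.Injective ((φ m).domRestrict Y) :=
    LinearMap.injective_domRestrict_iff.mpr (disjoint_iff.mpr hmY).symm
  have : Module.Finite K Y := Module.Finite.of_injective _ hinj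
  refine le_antisymm ?_ (Submodule.one_le_finrank_iff.mpr hJ.prop)
  simpa using LinearMap.finrank_le_finrank_of_injective hinj

end LineEdges

section LinearForm

variable {K σ : Type*} [Field K] [Finite σ]

open scoped Classical in
/-- The homogeneous linear form whose polynomial function is a given functional on `K^σ`. -/
noncomputable def linearForm : Module.Dual K (σ → K) →ₗ[K] MvPolynomial σ K :=
  (Pi.basisFun K σ).dualBasis.constr K X

theorem linearForm_proj (i : σ) : linearForm (LinearMap.proj i) = (X i : MvPolynomial σ K) := by
  classical
  have hproj : LinearMap.proj i = (Pi.basisFun K σ).dualBasis i := by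
    ext; simp
  rw [linearForm, hproj, Module.Basis.constr_basis]

theorem eval_linearForm (φ : Module.Dual K (σ → K)) (q : σ → K) :
    eval q (linearForm φ) = φ q := by
  classical
  suffices (aeval q).toLinearMap ∘ₗ linearForm = Module.Dual.eval K (σ → K) q from
    LinearMap.congr_fun this φ
  refine (Pi.basisFun K σ).dualBasis.ext fun i => ?_
  rw [LinearMap.comp_apply, linearForm, Module.Basis.constr_basis]
  simp

theorem exists_linearForm_eq {f : MvPolynomial σ K} (hf : f.IsHomogeneous 1) :
    ∃ φ, linearForm φ = f := by
  suffices homogeneousSubmodule σ K 1 ≤ LinearMap.range linearForm from this hf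
  rw [homogeneousSubmodule_one_eq_span_X, Submodule.span_le]
  rintro _ ⟨i, rfl⟩
  exact ⟨LinearMap.proj i, linearForm_proj i⟩

theorem span_X_le_of_linearForm_mem {ι : Type*} [Finite ι] {φ : ι → Module.Dual K (σ → K)}
    (hφ : ⨅ j, LinearMap.ker (φ j) = ⊥) {I : Ideal (MvPolynomial σ K)}
    (hI : ∀ j, linearForm (φ j) ∈ I) :
    Ideal.span (Set.range X) ≤ I := by
  rw [Ideal.span_le]
  rintro _ ⟨i, rfl⟩
  have hproj : LinearMap.proj i ∈ Submodule.span K (Set.range φ) :=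
    mem_span_of_iInf_ker_le_ker (hφ.trans_le bot_le)
  have hspan : Submodule.span K (Set.range φ) ≤ (I.restrictScalars K).comap linearForm :=
    Submodule.span_le.mpr (Set.range_subset_iff.mpr hI)
  have hmem : linearForm (LinearMap.proj i) ∈ I := hspan hproj
  rwa [linearForm_proj] at hmem

end LinearForm

section EdgeIdeal

variable {K σ ι : Type*} [Field K] [Fintype ι]

open scoped Classical in
/-- The ideal `Γ` generated by the products `∏_{k ∉ J(Y)} l_k`, where `Y` ranges over the
one-dimensional edges of the arrangement `l`. Edges are encoded as subspaces `Y` whose underlying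
set is the common zero set of the `l j`, `j ∈ J`, for some `J`. -/
noncomputable def edgeIdeal (l : ι → MvPolynomial σ K) : Ideal (MvPolynomial σ K) :=
  Ideal.span {f | ∃ (Y : Submodule K (σ → K)) (J : Finset ι),
    (Y : Set (σ → K)) = ⋂ j ∈ J, {q | eval q (l j) = 0} ∧
    Module.finrank K Y = 1 ∧
    f = ∏ m with ¬ (Y : Set (σ → K)) ⊆ {q | eval q (l m) = 0}, l m}

variable [Finite σ]

open scoped Classical in
theorem prod_linearForm_mem_edgeIdeal {φ : ι → Module.Dual K (σ → K)} {J : Finset ι}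
    (hJ : Module.finrank K ↥(⨅ j ∈ J, LinearMap.ker (φ j)) = 1) :
    ∏ m with ¬ ⨅ j ∈ J, LinearMap.ker (φ j) ≤ LinearMap.ker (φ m), linearForm (φ m) ∈
      edgeIdeal fun j => linearForm (φ j) := by
  have hker (j : ι) :
      {q | eval q (linearForm (φ j)) = 0} = (LinearMap.ker (φ j) : Set (σ → K)) := by
    ext q; simp [eval_linearForm]
  refine Ideal.subset_span ⟨_, J, ?_, hJ, ?_⟩
  · simp only [hker, Submodule.coe_iInf]
  · simp only [hker, SetLike.coe_subset_coe]

theorem iInf_ker_eq_bot_of_edgeIdeal_le {φ : ι → Module.Dual K (σ → K)}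
    (hφ : ⨅ j, LinearMap.ker (φ j) = ⊥) {P : Ideal (MvPolynomial σ K)} [P.IsPrime]
    (hP : edgeIdeal (fun j => linearForm (φ j)) ≤ P) :
    ⨅ j : {j // linearForm (φ j) ∈ P}, LinearMap.ker (φ j) = ⊥ := by
  classical
  by_contra hne
  obtain ⟨J, hSJ, hJ⟩ := exists_superset_finrank_iInf_ker_eq_one hφ
    (S := {j | linearForm (φ j) ∈ P}) (by simpa [iInf_subtype] using hne)
  obtain ⟨m, hm, hmP⟩ := Ideal.IsPrime.prod_mem_iff.mp (hP (prod_linearForm_mem_edgeIdeal hJ))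
  have hmJ : m ∈ J := hSJ (by simpa using hmP)
  exact (Finset.mem_filter.mp hm).2 (iInf₂_le m hmJ)

theorem span_X_le_radical_edgeIdeal {φ : ι → Module.Dual K (σ → K)}
    (hφ : ⨅ j, LinearMap.ker (φ j) = ⊥) :
    Ideal.span (Set.range X) ≤ (edgeIdeal fun j => linearForm (φ j)).radical := by
  rw [Ideal.radical_eq_sInf]
  refine le_sInf fun P ⟨hP, _⟩ => ?_
  exact span_X_le_of_linearForm_mem (iInf_ker_eq_bot_of_edgeIdeal_le hφ hP) fun j => j.2

theorem maximal_ideal_power_le_edge_ideal_general {l : ι → MvPolynomial σ K}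
    (hlh : ∀ j, (l j).IsHomogeneous 1)
    (hess : ∀ p : σ → K, (∀ j, eval p (l j) = 0) → p = 0) :
    ∃ k : ℕ, 0 < k ∧ Ideal.span (Set.range X) ^ k ≤ edgeIdeal l := by
  choose φ hφl using fun j => exists_linearForm_eq (hlh j)
  obtain rfl : (fun j => linearForm (φ j)) = l := funext hφl
  have hφ : ⨅ j, LinearMap.ker (φ j) = ⊥ := by
    simpa [Submodule.eq_bot_iff, eval_linearForm] using hess
  obtain ⟨k, hk⟩ := Ideal.exists_pow_le_of_le_radical_of_fg (span_X_le_radical_edgeIdeal hφ)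
    (IsNoetherian.noetherian _)
  exact ⟨k + 1, k.succ_pos, (Ideal.pow_le_pow_right k.le_succ).trans hk⟩

end EdgeIdeal

open scoped Classical in
/-- For a central essential arrangement `l₁⋯l_d`, some power of the maximal ideal
`𝔪 = (x₁,…,x_n)` is contained in the ideal `Γ` generated by the products
`∏_{k ∉ J(X)} l_k` over all one-dimensional edges `X`. -/
theorem maximal_ideal_power_le_edge_ideal (n d : ℕ) (hn : 1 ≤ n) (hd : 1 ≤ d)
    (l : Fin d → MvPolynomial (Fin n) ℂ)
    (hl0 : ∀ j, l j ≠ 0)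
    (hlh : ∀ j, (l j).IsHomogeneous 1)
    (hess : ∀ p : Fin n → ℂ, (∀ j, eval p (l j) = 0) → p = 0) :
    ∃ k : ℕ, 0 < k ∧
      (Ideal.span (Set.range fun i : Fin n => (X i : MvPolynomial (Fin n) ℂ))) ^ k ≤
        Ideal.span {f : MvPolynomial (Fin n) ℂ |
          ∃ (Y : Submodule ℂ (Fin n → ℂ)) (J : Finset (Fin d)),
            (Y : Set (Fin n → ℂ)) = ⋂ j ∈ J, {q : Fin n → ℂ | eval q (l j) = 0} ∧
            Module.finrank ℂ Y = 1 ∧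
            f = ∏ m ∈ Finset.univ.filter
                (fun m : Fin d => ¬ (Y : Set (Fin n → ℂ)) ⊆ {q : Fin n → ℂ | eval q (l m) = 0}),
              l m} := by
  exact maximal_ideal_power_le_edge_ideal_general hlh hess
end

section
/- Let n, d ≥ 1 and let l_1,…,l_d ∈ ℂ[x_1,…,x_n] be nonzero homogeneous linear forms (not necessarily distinct) whose only common zero in ℂ^n is the origin. Call a linear subspace X ⊆ ℂ^n an edge if X = ⋂_{j∈J} ker(l_j) for some subset J ⊆ {1,…,d}, and for an edge X set J(X) = { j : X ⊆ ker(l_j) }. Then for every point p ∈ ℂ^n with p ≠ 0 there exists an edge X with dim_ℂ X = 1 such that the polynomial ∏_{k ∉ J(X)} l_k does not vanish at p. Equivalently, the common zero locus of the polynomials ∏_{k ∉ J(X)} l_k, as X ranges over all one-dimensional edges, is exactly {0}. -/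
open MvPolynomial

/-!
The forms vanishing at `p` cut out an edge that contains `p`, hence is nonzero. Below it choose a
minimal nonzero edge `X`. Since the arrangement is essential, some form `l k` does not vanish on
`X`; by minimality the smaller edge `X ∩ ker (l k)` is zero, so `l k` embeds `X` into the base
field and `X` is a line. Every form that vanishes at `p` vanishes on `X`, so no factor of the
product over the forms not vanishing on `X` is zero at `p`.
-/

section Edges

variable {ι K V : Type*} [Field K] [AddCommGroup V] [Module K V] {f : ι → Module.Dual K V}
  {X : Submodule K V}

/-- The edges (also called flats) of the central arrangement of the kernels of the functionals
`f i`: the intersections of arbitrary subfamilies. The empty subfamily gives the whole space. -/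
def IsEdge (f : ι → Module.Dual K V) (X : Submodule K V) : Prop :=
  ∃ J : Set ι, X = ⨅ j ∈ J, LinearMap.ker (f j)

theorem IsEdge.inf_ker (hX : IsEdge f X) (k : ι) : IsEdge f (X ⊓ LinearMap.ker (f k)) := by
  obtain ⟨J, rfl⟩ := hX
  exact ⟨insert k J, by rw [iInf_insert, inf_comm]⟩

theorem finrank_eq_one_of_disjoint_ker {φ : Module.Dual K V} (hX : X ≠ ⊥)
    (hdisj : Disjoint X (LinearMap.ker φ)) : Module.finrank K X = 1 := by
  have hinj : Function.Injective (φ.domRestrict X) := LinearMap.injective_domRestrict_iff.2 hdisj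
  have hne : φ.domRestrict X ≠ 0 := fun h =>
    hX <| hdisj.eq_bot_of_le fun x hx => LinearMap.congr_fun h (⟨x, hx⟩ : X)
  rw [(LinearEquiv.ofBijective _ ⟨hinj, LinearMap.surjective hne⟩).finrank_eq,
    Module.finrank_self]

theorem finrank_eq_one_of_minimal_isEdge (hess : ⨅ i, LinearMap.ker (f i) = ⊥)
    (hX : Minimal (fun Y => IsEdge f Y ∧ Y ≠ ⊥) X) : Module.finrank K X = 1 := by
  obtain ⟨hedge, hne⟩ := hX.prop
  obtain ⟨k, hk⟩ : ∃ k, ¬ X ≤ LinearMap.ker (f k) := by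
    by_contra! hle
    exact hne (le_bot_iff.1 (hess ▸ le_iInf hle))
  refine finrank_eq_one_of_disjoint_ker (φ := f k) hne (disjoint_iff.2 ?_)
  by_contra hinf
  exact hk (le_inf_iff.1 (hX.le_of_le ⟨hedge.inf_ker k, hinf⟩ inf_le_left)).2

theorem exists_isEdge_finrank_eq_one [FiniteDimensional K V]
    (hess : ⨅ i, LinearMap.ker (f i) = ⊥) {p : V} (hp : p ≠ 0) :
    ∃ X, IsEdge f X ∧ Module.finrank K X = 1 ∧ ∀ k, f k p = 0 → X ≤ LinearMap.ker (f k) := by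
  let E : Submodule K V := ⨅ j ∈ {j | f j p = 0}, LinearMap.ker (f j)
  have hpE : p ∈ E := by simp [E]
  have hE : IsEdge f E ∧ E ≠ ⊥ := ⟨⟨_, rfl⟩, (Submodule.ne_bot_iff E).2 ⟨p, hpE, hp⟩⟩
  obtain ⟨X, hXE, hX⟩ := exists_minimal_le_of_wellFoundedLT (fun Y => IsEdge f Y ∧ Y ≠ ⊥) E hE
  exact ⟨X, hX.prop.1, finrank_eq_one_of_minimal_isEdge hess hX,
    fun k hk => hXE.trans (iInf₂_le k hk)⟩

theorem finiteDimensional_of_iInf_ker_eq_bot [Finite ι]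
    (hess : ⨅ i, LinearMap.ker (f i) = ⊥) : FiniteDimensional K V :=
  Module.Finite.of_injective (LinearMap.pi f) <| by rwa [← LinearMap.ker_eq_bot, LinearMap.ker_pi]

end Edges

theorem exists_linearMap_eq_eval_of_isHomogeneous_one {σ R : Type*} [CommSemiring R]
    {q : MvPolynomial σ R} (hq : q.IsHomogeneous 1) :
    ∃ φ : (σ → R) →ₗ[R] R, ∀ x, φ x = eval x q := by
  replace hq : q ∈ Submodule.span R (Set.range X) := by
    rwa [← homogeneousSubmodule_one_eq_span_X]
  induction hq using Submodule.span_induction with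
  | mem q hq =>
    obtain ⟨i, rfl⟩ := hq
    exact ⟨LinearMap.proj i, by simp⟩
  | zero => exact ⟨0, by simp⟩
  | add q r _ _ hq hr =>
    obtain ⟨φ, hφ⟩ := hq
    obtain ⟨ψ, hψ⟩ := hr
    exact ⟨φ + ψ, by simp [hφ, hψ]⟩
  | smul a q _ hq =>
    obtain ⟨φ, hφ⟩ := hq
    exact ⟨a • φ, by simp [hφ, smul_eval]⟩

open scoped Classical in
theorem onedim_edge_product_nonvanishing_general {ι σ K : Type*} [Fintype ι] [Field K]
    (l : ι → MvPolynomial σ K) (hlh : ∀ j, (l j).IsHomogeneous 1)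
    (hess : ∀ p : σ → K, (∀ j, eval p (l j) = 0) → p = 0) (p : σ → K) (hp : p ≠ 0) :
    ∃ (X : Submodule K (σ → K)) (J : Finset ι),
      (X : Set (σ → K)) = ⋂ j ∈ J, {q : σ → K | eval q (l j) = 0} ∧
      Module.finrank K X = 1 ∧
      eval p (∏ k ∈ Finset.univ.filter
          (fun k : ι => ¬ (X : Set (σ → K)) ⊆ {q : σ → K | eval q (l k) = 0}),
        l k) ≠ 0 := by
  choose f hf using fun j => exists_linearMap_eq_eval_of_isHomogeneous_one (hlh j)
  have hker : ⨅ j, LinearMap.ker (f j) = ⊥ := (Submodule.eq_bot_iff _).2 fun q hq =>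
    hess q fun j => by rw [← hf]; exact (Submodule.mem_iInf _).1 hq j
  have := finiteDimensional_of_iInf_ker_eq_bot hker
  obtain ⟨X, ⟨J, hJ⟩, hrank, hvanish⟩ := exists_isEdge_finrank_eq_one hker hp
  refine ⟨X, J.toFinset, ?_, hrank, ?_⟩
  · ext q
    simp [hJ, hf]
  · rw [map_prod, Finset.prod_ne_zero_iff]
    intro k hk hkp
    refine (Finset.mem_filter.1 hk).2 fun q hq => ?_
    exact (hf k q).symm.trans (hvanish k ((hf k p).trans hkp) hq)

open scoped Classical in
theorem onedim_edge_product_nonvanishing (n d : ℕ) (hn : 1 ≤ n) (hd : 1 ≤ d)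
    (l : Fin d → MvPolynomial (Fin n) ℂ)
    (hl0 : ∀ j, l j ≠ 0)
    (hlh : ∀ j, (l j).IsHomogeneous 1)
    (hess : ∀ p : Fin n → ℂ, (∀ j, eval p (l j) = 0) → p = 0)
    (p : Fin n → ℂ) (hp : p ≠ 0) :
    ∃ (X : Submodule ℂ (Fin n → ℂ)) (J : Finset (Fin d)),
      (X : Set (Fin n → ℂ)) = ⋂ j ∈ J, {q : Fin n → ℂ | eval q (l j) = 0} ∧
      Module.finrank ℂ X = 1 ∧
      eval p (∏ k ∈ Finset.univ.filter
          (fun k : Fin d => ¬ (X : Set (Fin n → ℂ)) ⊆ {q : Fin n → ℂ | eval q (l k) = 0}),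
        l k) ≠ 0 :=
  onedim_edge_product_nonvanishing_general l hlh hess p hp
end

section
/- (Trace of adjoint actions for a preferred basis of logarithmic derivations; algebraic form of Castro-Jiménez–Ucha's formula.) Let n ≥ 1 and let f ∈ ℂ[x_1,…,x_n] be nonzero. Let δ_1,…,δ_n be ℂ-linear derivations of ℂ[x_1,…,x_n] such that: (a) δ_i(f) = 0 for all i ≤ n−1; (b) δ_n(f) = f; (c) the determinant of the n×n matrix H with entries H_{k,i} = δ_i(x_k) equals f. Suppose c : {1,…,n}^3 → ℂ[x_1,…,x_n] satisfies, for all i, j, the commutator identity [δ_i, δ_j] = Σ_{k=1}^{n} c(k,i,j) · δ_k (where [·,·] is the commutator of derivations and the sum is an ℂ[x]-linear combination). Then for every i ≤ n−1 one has Σ_{j=1}^{n} c(j,i,j) = − Σ_{k=1}^{n} ∂_k(δ_i(x_k)), and for i = n one has Σ_{j=1}^{n} c(j,n,j) = − Σ_{k=1}^{n} ∂_k(δ_n(x_k)) + 1. -/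
open MvPolynomial

/-!
Let `H` be the matrix of coefficients of `δ₁, …, δₙ`, let `D` be a derivation with
`[D, δⱼ] = ∑ₖ Cₖⱼ δₖ`, and let `J` be the Jacobian matrix of the coefficients of `D`. Evaluating the
commutators at the variables gives `D(H) = J H + H C`, so Jacobi's formula for the derivative of
a determinant yields `D(det H) = (tr J + tr C) det H`. Here `tr J` is the divergence of `D`.
If moreover `det H = f` is cancellable and `D f = a f`, it follows that `tr C = a - div D`.
-/

section Determinant

theorem derivation_prod {R A M ι : Type*} [CommSemiring R] [CommSemiring A] [Algebra R A]
    [AddCommMonoid M] [Module A M] [Module R M] [DecidableEq ι]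
    (D : Derivation R A M) (s : Finset ι) (g : ι → A) :
    D (∏ i ∈ s, g i) = ∑ i ∈ s, (∏ j ∈ s.erase i, g j) • D (g i) := by
  induction s using Finset.induction_on with
  | empty => simp
  | insert a s ha ih =>
    have prod_erase_insert : ∀ i ∈ s,
        ∏ j ∈ (insert a s).erase i, g j = g a * ∏ j ∈ s.erase i, g j := fun i hi => by
      rw [Finset.erase_insert_of_ne (ne_of_mem_of_not_mem hi ha).symm,
        Finset.prod_insert (fun h => ha (Finset.mem_of_mem_erase h))]
    rw [Finset.prod_insert ha, D.leibniz, ih, Finset.sum_insert ha, Finset.erase_insert ha,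
      Finset.smul_sum, add_comm]
    congr 1
    exact Finset.sum_congr rfl fun i hi => by rw [prod_erase_insert i hi, mul_smul]

variable {R A ι : Type*} [CommSemiring R] [CommRing A] [Algebra R A] [Fintype ι] [DecidableEq ι]

theorem derivation_det_eq_sum_det_updateCol (D : Derivation R A A) (M : Matrix ι ι A) :
    D M.det = ∑ i, (M.updateCol i fun k => D (M k i)).det := by
  have prod_updateCol (σ : Equiv.Perm ι) (i : ι) :
      ∏ j, M.updateCol i (fun k => D (M k i)) (σ j) j =
        (∏ j ∈ Finset.univ.erase i, M (σ j) j) * D (M (σ i) i) := by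
    rw [← Finset.prod_erase_mul _ _ (Finset.mem_univ i), Matrix.updateCol_self]
    congr 1
    exact Finset.prod_congr rfl fun j hj => Matrix.updateCol_ne (Finset.ne_of_mem_erase hj)
  simp only [Matrix.det_apply, prod_updateCol, map_sum, Units.smul_def, map_zsmul, derivation_prod,
    smul_eq_mul, Finset.smul_sum]
  exact Finset.sum_comm

theorem derivation_det_eq_trace_adjugate_mul (D : Derivation R A A) (M : Matrix ι ι A) :
    D M.det = (M.adjugate * M.map D).trace := by
  rw [derivation_det_eq_sum_det_updateCol]
  refine Finset.sum_congr rfl fun i _ => ?_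
  rw [← Matrix.cramer_apply, Matrix.cramer_eq_adjugate_mulVec]
  rfl

theorem derivation_det_of_map_eq_mul_add_mul {D : Derivation R A A} {M J C : Matrix ι ι A}
    (h : M.map D = J * M + M * C) : D M.det = M.det * (J.trace + C.trace) := by
  have trace_left : (M.adjugate * (J * M)).trace = M.det * J.trace := by
    rw [Matrix.trace_mul_comm, Matrix.mul_assoc, Matrix.mul_adjugate, Matrix.mul_smul,
      Matrix.mul_one, Matrix.trace_smul, smul_eq_mul]
  have trace_right : (M.adjugate * (M * C)).trace = M.det * C.trace := by
    rw [← Matrix.mul_assoc, Matrix.adjugate_mul, Matrix.smul_mul, Matrix.one_mul,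
      Matrix.trace_smul, smul_eq_mul]
  rw [derivation_det_eq_trace_adjugate_mul, h, Matrix.mul_add, Matrix.trace_add, trace_left,
    trace_right, mul_add]

end Determinant

theorem derivation_sum_apply {R A M ι : Type*} [CommSemiring R] [CommSemiring A] [Algebra R A]
    [AddCommMonoid M] [Module A M] [Module R M] (s : Finset ι) (D : ι → Derivation R A M) (a : A) :
    (∑ i ∈ s, D i) a = ∑ i ∈ s, D i a :=
  map_sum ((Pi.evalAddMonoidHom _ a).comp Derivation.coeFnAddMonoidHom) D s

section CoefficientMatrices

variable {R σ ι : Type*} [CommSemiring R]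

/-- The matrix whose `i`-th column holds the coefficients of `δ i` in the basis `∂ₖ`. When the `δ i`
form a basis of the logarithmic derivations of `f`, this is the Saito matrix of `f`. -/
noncomputable def saitoMatrix (δ : ι → Derivation R (MvPolynomial σ R) (MvPolynomial σ R)) :
    Matrix σ ι (MvPolynomial σ R) :=
  .of fun k i => δ i (X k)

/-- The Jacobian matrix of the coefficients of a polynomial vector field `D`, with rows indexed by
the coefficients and columns by the variables of differentiation. -/
noncomputable def jacobianMatrix (D : Derivation R (MvPolynomial σ R) (MvPolynomial σ R)) :
    Matrix σ σ (MvPolynomial σ R) :=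
  .of fun k l => pderiv l (D (X k))

variable [Fintype σ]

/-- The divergence of a polynomial vector field `D`, i.e. the trace of its Jacobian matrix. -/
noncomputable def divergence (D : Derivation R (MvPolynomial σ R) (MvPolynomial σ R)) :
    MvPolynomial σ R :=
  ∑ k, pderiv k (D (X k))

theorem trace_jacobianMatrix (D : Derivation R (MvPolynomial σ R) (MvPolynomial σ R)) :
    (jacobianMatrix D).trace = divergence D :=
  rfl

theorem derivation_eq_sum_smul_pderiv
    (D : Derivation R (MvPolynomial σ R) (MvPolynomial σ R)) :
    D = ∑ k, D (X k) • pderiv k := by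
  classical
  refine derivation_ext fun m => ?_
  simp [derivation_sum_apply, pderiv_X, Pi.single_apply]

theorem jacobianMatrix_mul_saitoMatrix_apply
    (D : Derivation R (MvPolynomial σ R) (MvPolynomial σ R))
    (δ : ι → Derivation R (MvPolynomial σ R) (MvPolynomial σ R)) (m : σ) (j : ι) :
    (jacobianMatrix D * saitoMatrix δ) m j = δ j (D (X m)) := by
  conv_rhs => rw [derivation_eq_sum_smul_pderiv (δ j), derivation_sum_apply]
  exact Finset.sum_congr rfl fun k _ => mul_comm _ _

end CoefficientMatrices

section Commutators

variable {R σ : Type*} [CommRing R] [Fintype σ]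

theorem map_saitoMatrix_of_commutator_eq_sum {ι : Type*} [Fintype ι]
    {D : Derivation R (MvPolynomial σ R) (MvPolynomial σ R)}
    {δ : ι → Derivation R (MvPolynomial σ R) (MvPolynomial σ R)}
    {C : Matrix ι ι (MvPolynomial σ R)} (hC : ∀ j, ⁅D, δ j⁆ = ∑ k, C k j • δ k) :
    (saitoMatrix δ).map D = jacobianMatrix D * saitoMatrix δ + saitoMatrix δ * C := by
  ext1 m j
  have saitoMatrix_mul : (saitoMatrix δ * C) m j = ⁅D, δ j⁆ (X m) := by
    rw [hC, derivation_sum_apply]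
    exact Finset.sum_congr rfl fun k _ => mul_comm _ _
  rw [Matrix.add_apply, jacobianMatrix_mul_saitoMatrix_apply, saitoMatrix_mul,
    Derivation.commutator_apply, add_sub_cancel]
  rfl

theorem derivation_det_saitoMatrix [DecidableEq σ]
    {D : Derivation R (MvPolynomial σ R) (MvPolynomial σ R)}
    {δ : σ → Derivation R (MvPolynomial σ R) (MvPolynomial σ R)}
    {C : Matrix σ σ (MvPolynomial σ R)} (hC : ∀ j, ⁅D, δ j⁆ = ∑ k, C k j • δ k) :
    D (saitoMatrix δ).det = (saitoMatrix δ).det * (divergence D + C.trace) := by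
  rw [derivation_det_of_map_eq_mul_add_mul (map_saitoMatrix_of_commutator_eq_sum hC),
    trace_jacobianMatrix]

theorem trace_adjoint_preferred_basis_general [DecidableEq σ] {f a : MvPolynomial σ R}
    (hf : IsRegular f) {D : Derivation R (MvPolynomial σ R) (MvPolynomial σ R)} (hD : D f = f * a)
    {δ : σ → Derivation R (MvPolynomial σ R) (MvPolynomial σ R)} (hdet : (saitoMatrix δ).det = f)
    {C : Matrix σ σ (MvPolynomial σ R)} (hC : ∀ j, ⁅D, δ j⁆ = ∑ k, C k j • δ k) :
    C.trace = -divergence D + a := by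
  have hdiv : a = divergence D + C.trace :=
    hf.left (hD.symm.trans (hdet ▸ derivation_det_saitoMatrix hC))
  rw [hdiv, neg_add_cancel_left]

end Commutators

/-- Trace of adjoint actions for a preferred basis of logarithmic derivations
(algebraic form of the Castro-Jiménez–Ucha formula). -/
theorem trace_adjoint_preferred_basis (n : ℕ) (hn : 1 ≤ n)
    (f : MvPolynomial (Fin n) ℂ) (hf : f ≠ 0)
    (δ : Fin n → Derivation ℂ (MvPolynomial (Fin n) ℂ) (MvPolynomial (Fin n) ℂ))
    (hkill : ∀ i : Fin n, (i : ℕ) + 1 < n → δ i f = 0)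
    (heuler : ∀ i : Fin n, (i : ℕ) + 1 = n → δ i f = f)
    (hdet : (Matrix.of fun k i : Fin n => δ i (X k)).det = f)
    (c : Fin n → Fin n → Fin n → MvPolynomial (Fin n) ℂ)
    (hc : ∀ i j : Fin n, ⁅δ i, δ j⁆ = ∑ k : Fin n, c k i j • δ k) :
    (∀ i : Fin n, (i : ℕ) + 1 < n →
        ∑ j : Fin n, c j i j = -∑ k : Fin n, pderiv k (δ i (X k))) ∧
    (∀ i : Fin n, (i : ℕ) + 1 = n →
        ∑ j : Fin n, c j i j = -∑ k : Fin n, pderiv k (δ i (X k)) + 1) := by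
  have trace_eq {i : Fin n} {a : MvPolynomial (Fin n) ℂ} (ha : δ i f = f * a) :
      ∑ j, c j i j = -∑ k, pderiv k (δ i (X k)) + a :=
    trace_adjoint_preferred_basis_general (.of_ne_zero hf) ha hdet (C := .of (c · i ·)) (hc i)
  exact ⟨fun i hi => (trace_eq ((hkill i hi).trans (mul_zero f).symm)).trans (add_zero _),
    fun i hi => trace_eq ((heuler i hi).trans (mul_one f).symm)⟩
end

section
/- Let q, r ≥ 1, let v : {1,…,q} → ℕ with v(t) ≥ 1 for all t, let J_1,…,J_r be subsets of {1,…,q}, and let d_1,…,d_r and m_1,…,m_r be positive integers such that: (i) for every t, v(t) = Σ_{k : t ∈ J_k} d_k; (ii) for every k and every j ∈ J_k, v(j) = m_k. Let d'_1,…,d'_r be natural numbers with d'_k ≤ d_k for all k, let ρ be an integer, and let T ⊆ {1,…,q}. In the polynomial ring ℚ[s_1,…,s_r], set P = Σ_{k=1}^{r} (d_k·|J_k∩T|)·s_k + ρ + Σ_{k=1}^{r} d'_k·|J_k∩T|, and let φ be the ℚ-algebra endomorphism of ℚ[s_1,…,s_r] determined by φ(s_k) = −s_k − 1/m_k − 2d'_k/d_k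 − (d_k − d'_k)/d_k. Then φ(P) = −( P + |T| + Σ_{k=1}^{r} d_k·|J_k∩T| − 2ρ − Σ_{k=1}^{r} d'_k·|J_k∩T| ). -/
open MvPolynomial

/-!
The substitution `φ` is the point reflection `s ↦ -s - c`, so it sends an affine polynomial
`∑ aₖ sₖ + b` to `-(∑ aₖ sₖ + (∑ aₖ cₖ - b))`, and only `∑ aₖ cₖ` has to be computed. With
`aₖ = dₖ |Jₖ ∩ T|` the fractions over `dₖ` contribute the degrees `∑ dₖ |Jₖ ∩ T|` and
`∑ d'ₖ |Jₖ ∩ T|`. The fractions `1 / mₖ` contribute `|T|`: exchanging the sums, each form `t ∈ T`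
receives the weights `dₖ / mₖ = dₖ / v t` of the factors through `t`, and these add up to `1`.
-/

section WeightedDoubleCounting

variable {ι α : Type*} [Fintype ι] [DecidableEq α] (J : ι → Finset α) (T : Finset α)

theorem sum_mul_card_inter_eq_sum_sum_filter {R : Type*} [NonAssocSemiring R] (w : ι → R) :
    ∑ k, w k * ((J k ∩ T).card : R) = ∑ t ∈ T, ∑ k with t ∈ J k, w k := by
  calc ∑ k, w k * ((J k ∩ T).card : R)
      = ∑ k, ∑ _t ∈ J k ∩ T, w k := by
        simp only [Finset.sum_const, nsmul_eq_mul, Nat.cast_comm]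
    _ = ∑ t ∈ T, ∑ k with t ∈ J k, w k :=
        Finset.sum_comm' fun k t => by simp [and_comm]

variable {J T} {K : Type*} [Field K]

theorem sum_div_mul_card_inter_eq_card {v : α → K} {d m : ι → K} (hv : ∀ t ∈ T, v t ≠ 0)
    (hvd : ∀ t ∈ T, v t = ∑ k with t ∈ J k, d k) (hvm : ∀ k, ∀ t ∈ J k ∩ T, v t = m k) :
    ∑ k, d k / m k * ((J k ∩ T).card : K) = T.card := by
  have weights_sum_one : ∀ t ∈ T, ∑ k with t ∈ J k, d k / m k = 1 := fun t ht =>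
    calc ∑ k with t ∈ J k, d k / m k
        = ∑ k with t ∈ J k, d k / v t := Finset.sum_congr rfl fun k hk => by
          rw [hvm k t (Finset.mem_inter.mpr ⟨(Finset.mem_filter.mp hk).2, ht⟩)]
      _ = 1 := by rw [← Finset.sum_div, ← hvd t ht, div_self (hv t ht)]
  rw [sum_mul_card_inter_eq_sum_sum_filter, Finset.sum_congr rfl weights_sum_one,
    Finset.cast_card]

end WeightedDoubleCounting

theorem aeval_neg_X_sub_C_affine {σ R : Type*} [Fintype σ] [CommRing R] (a c : σ → R) (b : R) :
    aeval (fun k => -X k - C (c k)) (∑ k, C (a k) * X k + C b : MvPolynomial σ R) =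
      -(∑ k, C (a k) * X k + C (∑ k, a k * c k - b)) := by
  simp only [map_add, map_sub, map_sum, map_mul, aeval_X, aeval_C, algebraMap_eq, mul_sub,
    mul_neg, Finset.sum_sub_distrib, Finset.sum_neg_distrib]
  ring

theorem symmetry_involution_identity_general {ι α K : Type*} [Fintype ι] [DecidableEq α] [Field K]
    (v : α → K) (J : ι → Finset α) (d m d' : ι → K) (hd : ∀ k, d k ≠ 0) (ρ : K) (T : Finset α)
    (hv : ∀ t ∈ T, v t ≠ 0) (hvd : ∀ t ∈ T, v t = ∑ k with t ∈ J k, d k)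
    (hvm : ∀ k, ∀ t ∈ J k ∩ T, v t = m k)
    (P : MvPolynomial ι K)
    (hP : P = ∑ k, C (d k * ((J k ∩ T).card : K)) * X k +
      C (ρ + ∑ k, d' k * ((J k ∩ T).card : K)))
    (φ : MvPolynomial ι K →ₐ[K] MvPolynomial ι K)
    (hφ : φ = aeval fun k =>
      -X k - C (1 / m k) - C (2 * d' k / d k) - C ((d k - d' k) / d k)) :
    φ P = -(P + C ((T.card : K) + ∑ k, d k * ((J k ∩ T).card : K)
      - 2 * ρ - ∑ k, d' k * ((J k ∩ T).card : K))) := by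
  let c : ι → K := fun k => 1 / m k + 2 * d' k / d k + (d k - d' k) / d k
  have φ_eq_reflection : φ = aeval fun k => -X k - C (c k) := by
    simp only [hφ, c, C_add, sub_sub, add_assoc]
  have coeff_mul_shift (k : ι) : d k * ((J k ∩ T).card : K) * c k =
      d k / m k * ((J k ∩ T).card : K) + d k * ((J k ∩ T).card : K)
        + d' k * ((J k ∩ T).card : K) := by
    have d_mul_fractions : d k * (2 * d' k / d k + (d k - d' k) / d k) = d k + d' k := by
      rw [← add_div, mul_div_cancel₀ _ (hd k)]
      ring
    linear_combination ((J k ∩ T).card : K) * d_mul_fractions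
  have sum_coeff_mul_shift : ∑ k, d k * ((J k ∩ T).card : K) * c k =
      T.card + ∑ k, d k * ((J k ∩ T).card : K) + ∑ k, d' k * ((J k ∩ T).card : K) := by
    simp only [coeff_mul_shift, Finset.sum_add_distrib, sum_div_mul_card_inter_eq_card hv hvd hvm]
  rw [φ_eq_reflection, hP, aeval_neg_X_sub_C_affine, sum_coeff_mul_shift,
    add_assoc (Finset.sum _ _) (C _), ← C_add]
  congr 3
  ring

/-- The identity `φ(P^g_{f'F,X}) = −(P^g_{f'F,X} + d_{X,red} + d_X − 2r(X) − d'_X)`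
governing the symmetry of Bernstein–Sato ideals for unmixed factorizations. -/
theorem symmetry_involution_identity (q r : ℕ) (hq : 1 ≤ q) (hr : 1 ≤ r)
    (v : Fin q → ℕ) (hv : ∀ t, 1 ≤ v t)
    (J : Fin r → Finset (Fin q))
    (d m : Fin r → ℕ) (hd : ∀ k, 0 < d k) (hm : ∀ k, 0 < m k)
    (hvd : ∀ t : Fin q, v t = ∑ k ∈ Finset.univ.filter (fun k : Fin r => t ∈ J k), d k)
    (hvm : ∀ k : Fin r, ∀ j ∈ J k, v j = m k)
    (d' : Fin r → ℕ) (hd' : ∀ k, d' k ≤ d k)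
    (ρ : ℤ) (T : Finset (Fin q))
    (P : MvPolynomial (Fin r) ℚ)
    (hP : P = (∑ k : Fin r, C ((d k : ℚ) * ((J k ∩ T).card : ℚ)) * X k) +
        C ((ρ : ℚ) + ∑ k : Fin r, (d' k : ℚ) * ((J k ∩ T).card : ℚ)))
    (φ : MvPolynomial (Fin r) ℚ →ₐ[ℚ] MvPolynomial (Fin r) ℚ)
    (hφ : φ = aeval fun k : Fin r =>
        -X k - C ((1 : ℚ) / (m k : ℚ)) - C (2 * (d' k : ℚ) / (d k : ℚ))
          - C (((d k : ℚ) - (d' k : ℚ)) / (d k : ℚ))) :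
    φ P = -(P + C ((T.card : ℚ) + (∑ k : Fin r, (d k : ℚ) * ((J k ∩ T).card : ℚ))
        - 2 * (ρ : ℚ) - ∑ k : Fin r, (d' k : ℚ) * ((J k ∩ T).card : ℚ))) :=
  symmetry_involution_identity_general (fun t => (v t : ℚ)) J (d ·) (m ·) (d' ·)
    (fun k => Nat.cast_ne_zero.mpr (hd k).ne') ρ T
    (fun t _ => Nat.cast_ne_zero.mpr (Nat.one_le_iff_ne_zero.mp (hv t)))
    (fun t _ => mod_cast hvd t) (fun k t ht => mod_cast hvm k t (Finset.mem_inter.mp ht).1)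
    P hP φ hφ
end

section
/- (Right constant term of a product with a first-order operator.) Let A be a commutative ring and R = A[x_1,…,x_n] the polynomial ring. For a_1,…,a_n ∈ R let δ = Σ_i μ_{a_i} ∘ ∂_i (an A-linear endomorphism of R), and let c ∈ R. Suppose P is an A-linear endomorphism of R of the form P = Σ_{u} ∂^u ∘ μ_{P_u}, where u ranges over a finite set of multi-indices in ℕ^n, P_u ∈ R, and P_0 denotes the coefficient at u = 0 (the right constant term). Then there exist a finite family of polynomials Q_u ∈ R such that P ∘ (δ − μ_c) = Σ_u ∂^u ∘ μ_{Q_u} and the right constant term is Q_0 = −(Σ_{i=1}^{n} ∂_i(a_i))·P_0 − Σ_{i=1}^{n} a_i·∂_i(P_0) − c·P_0. -/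
open MvPolynomial

namespace RightConstantTerm

variable (A : Type*) [CommRing A] (n : ℕ)

/-- The multiplication operator `μ_p` on `A[x_1,…,x_n]`. -/
noncomputable def mulOp (p : MvPolynomial (Fin n) A) :
    Module.End A (MvPolynomial (Fin n) A) :=
  LinearMap.mulLeft A p

/-- The `i`-th formal partial derivative `∂_i` as an `A`-linear endomorphism. -/
noncomputable def pdOp (i : Fin n) :
    Module.End A (MvPolynomial (Fin n) A) :=
  (pderiv i).toLinearMap

/-- `∂^u = ∂_1^{u_1} ∘ ⋯ ∘ ∂_n^{u_n}`. -/
noncomputable def partialPow (u : Fin n → ℕ) :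
    Module.End A (MvPolynomial (Fin n) A) :=
  (List.ofFn fun i => pdOp A n i ^ u i).prod

/-!
The relation `μ_p ∘ ∂ᵢ = ∂ᵢ ∘ μ_p - μ_{∂ᵢ p}` moves the derivative of `P ∘ μ_{aᵢ} ∘ ∂ᵢ` to the left
of the coefficients. Each coefficient `P_u` then contributes `P_u aᵢ` at `u + eᵢ`, which is never
`0`, and `-∂ᵢ(P_u aᵢ)` at `u`. So only `P_0` reaches the right constant term, and the Leibniz rule
expands `-∂ᵢ(P_0 aᵢ)`. The argument applies to any commuting derivations in place
of the `∂ᵢ`.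
-/

section CommutingProducts

variable {n} {M : Type*} [Monoid M]

theorem prod_ofFn_mul {f g : Fin n → M} (hfg : ∀ i j, i < j → Commute (g i) (f j)) :
    (List.ofFn fun i => f i * g i).prod = (List.ofFn f).prod * (List.ofFn g).prod := by
  induction n with
  | zero => simp
  | succ n ih =>
    have tail := ih (f := fun i => f i.succ) (g := fun i => g i.succ)
      fun i j hij => hfg _ _ (Fin.succ_lt_succ_iff.mpr hij)
    have head : Commute (g 0) (List.ofFn fun i => f (Fin.succ i)).prod :=
      Commute.list_prod_right _ _ <| by
        simpa only [List.forall_mem_ofFn_iff] using fun i => hfg 0 _ i.succ_pos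
    simp only [List.ofFn_succ, List.prod_cons, tail, mul_assoc, head.left_comm]

theorem prod_ofFn_mulSingle (i : Fin n) (x : M) :
    (List.ofFn (Pi.mulSingle i x : Fin n → M)).prod = x := by
  induction n with
  | zero => exact i.elim0
  | succ n ih =>
    rw [List.ofFn_succ, List.prod_cons]
    cases i using Fin.cases with
    | zero => simp
    | succ i =>
      have tail : (fun j : Fin n => (Pi.mulSingle i.succ x : Fin (n + 1) → M) j.succ) =
          Pi.mulSingle i x := by
        ext j
        simp [Pi.mulSingle_apply]
      simp [tail, ih]

theorem prod_ofFn_pow_add_single {f : Fin n → M} (hf : ∀ i j, Commute (f i) (f j))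
    (u : Fin n → ℕ) (i : Fin n) :
    (List.ofFn fun j => f j ^ (u + Pi.single i 1 : Fin n → ℕ) j).prod =
      (List.ofFn fun j => f j ^ u j).prod * f i := by
  have split : (fun j => f j ^ (u + Pi.single i 1 : Fin n → ℕ) j) =
      fun j => f j ^ u j * (Pi.mulSingle i (f i) : Fin n → M) j := by
    ext j
    obtain rfl | hji := eq_or_ne j i
    · simp [pow_succ]
    · simp [hji]
  rw [split, prod_ofFn_mul, prod_ofFn_mulSingle]
  intro j k _
  obtain rfl | hji := eq_or_ne j i
  · simpa using (hf j k).pow_right (u k)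
  · simp [hji]

end CommutingProducts

section Derivations

variable {n} {k R : Type*} [CommSemiring k] [CommRing R] [Algebra k R]

theorem lmul_mul_derivation (D : Derivation k R R) (p : R) :
    Algebra.lmul k R p * D.toLinearMap =
      D.toLinearMap * Algebra.lmul k R p - Algebra.lmul k R (D p) := by
  ext q
  simp [mul_comm]

/-- The composite `D₁^{u₁} ∘ ⋯ ∘ Dₙ^{uₙ}` of powers of derivations; for `D = pderiv` it unfolds to
`partialPow`. -/
noncomputable def derivationPow (D : Fin n → Derivation k R R) (u : Fin n → ℕ) : Module.End k R :=
  (List.ofFn fun i => (D i).toLinearMap ^ u i).prod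

theorem derivationPow_add_single {D : Fin n → Derivation k R R}
    (hD : ∀ i j, Commute (D i).toLinearMap (D j).toLinearMap) (u : Fin n → ℕ) (i : Fin n) :
    derivationPow D (u + Pi.single i 1) = derivationPow D u * (D i).toLinearMap :=
  prod_ofFn_pow_add_single hD u i

/-- The operator `∑ u, D^u ∘ μ_{P u}` with right coefficients `P`. The coefficients are finitely
supported functions, so that the right constant term is the value `P 0`. -/
noncomputable def ofRightCoeffs (D : Fin n → Derivation k R R) :
    ((Fin n → ℕ) →₀ R) →ₗ[k] Module.End k R :=
  Finsupp.lsum k fun u =>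
    LinearMap.mulLeft k (derivationPow D u) ∘ₗ (Algebra.lmul k R).toLinearMap

theorem ofRightCoeffs_apply (D : Fin n → Derivation k R R) (P : (Fin n → ℕ) →₀ R) :
    ofRightCoeffs D P = P.sum fun u p => derivationPow D u * Algebra.lmul k R p :=
  rfl

theorem ofRightCoeffs_single (D : Fin n → Derivation k R R) (u : Fin n → ℕ) (p : R) :
    ofRightCoeffs D (Finsupp.single u p) = derivationPow D u * Algebra.lmul k R p := by
  simp [ofRightCoeffs_apply]

theorem ofRightCoeffs_mul_lmul (D : Fin n → Derivation k R R) (P : (Fin n → ℕ) →₀ R) (b : R) :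
    ofRightCoeffs D P * Algebra.lmul k R b = ofRightCoeffs D (b • P) := by
  induction P using Finsupp.induction_linear with
  | zero => simp
  | add P Q hP hQ => rw [map_add, add_mul, hP, hQ, smul_add, map_add]
  | single u p =>
    rw [Finsupp.smul_single, smul_eq_mul, mul_comm b]
    simp only [ofRightCoeffs_single, map_mul, mul_assoc]

/-- The action of right composition with `Dᵢ` on right coefficients: by the Leibniz rule it is the
index shift `u ↦ u + eᵢ` minus coefficientwise application of `Dᵢ`. -/
noncomputable def rightCoeffsMulDerivation (D : Fin n → Derivation k R R) (i : Fin n) :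
    ((Fin n → ℕ) →₀ R) →ₗ[k] (Fin n → ℕ) →₀ R :=
  Finsupp.lmapDomain R k (· + Pi.single i 1) - Finsupp.mapRange.linearMap (D i).toLinearMap

theorem ofRightCoeffs_mul_derivation {D : Fin n → Derivation k R R}
    (hD : ∀ i j, Commute (D i).toLinearMap (D j).toLinearMap)
    (P : (Fin n → ℕ) →₀ R) (i : Fin n) :
    ofRightCoeffs D P * (D i).toLinearMap =
      ofRightCoeffs D (rightCoeffsMulDerivation D i P) := by
  induction P using Finsupp.induction_linear with
  | zero => simp
  | add P Q hP hQ => rw [map_add, add_mul, hP, hQ, map_add, map_add]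
  | single u p =>
    simp only [rightCoeffsMulDerivation, LinearMap.sub_apply, Finsupp.lmapDomain_apply,
      Finsupp.mapDomain_single, Finsupp.mapRange.linearMap_apply, Finsupp.mapRange_single, map_sub,
      ofRightCoeffs_single, derivationPow_add_single hD]
    rw [mul_assoc, lmul_mul_derivation, mul_sub, mul_assoc]
    rfl

theorem rightCoeffsMulDerivation_apply_zero (D : Fin n → Derivation k R R) (i : Fin n)
    (P : (Fin n → ℕ) →₀ R) : rightCoeffsMulDerivation D i P 0 = -D i (P 0) := by
  have zero_notMem_range : (0 : Fin n → ℕ) ∉ Set.range fun u : Fin n → ℕ => u + Pi.single i 1 := by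
    rintro ⟨u, hu⟩
    simpa using congrFun hu i
  simp [rightCoeffsMulDerivation, Finsupp.mapDomain_of_notMem_range _ _ zero_notMem_range]

/-- The action of right composition with `∑ i, μ_{aᵢ} ∘ Dᵢ - μ_c` on right coefficients. -/
noncomputable def rightCoeffsMulFirstOrder (D : Fin n → Derivation k R R) (a : Fin n → R) (c : R)
    (P : (Fin n → ℕ) →₀ R) : (Fin n → ℕ) →₀ R :=
  ∑ i, rightCoeffsMulDerivation D i (a i • P) - c • P

theorem ofRightCoeffs_mul_firstOrder {D : Fin n → Derivation k R R}
    (hD : ∀ i j, Commute (D i).toLinearMap (D j).toLinearMap) (a : Fin n → R) (c : R)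
    (P : (Fin n → ℕ) →₀ R) :
    ofRightCoeffs D P *
        (∑ i, Algebra.lmul k R (a i) * (D i).toLinearMap - Algebra.lmul k R c) =
      ofRightCoeffs D (rightCoeffsMulFirstOrder D a c P) := by
  simp only [rightCoeffsMulFirstOrder, mul_sub, Finset.mul_sum, ← mul_assoc,
    ofRightCoeffs_mul_lmul, ofRightCoeffs_mul_derivation hD, map_sub, map_sum]

theorem rightCoeffsMulFirstOrder_apply_zero (D : Fin n → Derivation k R R) (a : Fin n → R) (c : R)
    (P : (Fin n → ℕ) →₀ R) :
    rightCoeffsMulFirstOrder D a c P 0 =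
      -(∑ i, D i (a i)) * P 0 - (∑ i, a i * D i (P 0)) - c * P 0 := by
  simp only [rightCoeffsMulFirstOrder, Finsupp.sub_apply, Finsupp.finsetSum_apply,
    rightCoeffsMulDerivation_apply_zero, Finsupp.smul_apply, smul_eq_mul, Derivation.leibniz,
    Finset.sum_neg_distrib, Finset.sum_add_distrib, ← Finset.mul_sum]
  ring

theorem right_constant_term_mul_first_order_general {D : Fin n → Derivation k R R}
    (hD : ∀ i j, Commute (D i).toLinearMap (D j).toLinearMap) (a : Fin n → R) (c : R)
    (s : Finset (Fin n → ℕ)) (Pcoef : (Fin n → ℕ) → R) (hPsupp : ∀ u ∉ s, Pcoef u = 0) :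
    ∃ (t : Finset (Fin n → ℕ)) (Qcoef : (Fin n → ℕ) → R),
      (∀ u ∉ t, Qcoef u = 0) ∧
      (∑ u ∈ s, derivationPow D u * Algebra.lmul k R (Pcoef u)) *
          (∑ i, Algebra.lmul k R (a i) * (D i).toLinearMap - Algebra.lmul k R c) =
        ∑ u ∈ t, derivationPow D u * Algebra.lmul k R (Qcoef u) ∧
      Qcoef 0 = -(∑ i, D i (a i)) * Pcoef 0 - (∑ i, a i * D i (Pcoef 0)) - c * Pcoef 0 := by
  let P : (Fin n → ℕ) →₀ R := .onFinset s Pcoef fun u => not_imp_comm.mp (hPsupp u)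
  have hP : ofRightCoeffs D P = ∑ u ∈ s, derivationPow D u * Algebra.lmul k R (Pcoef u) :=
    Finsupp.onFinset_sum _ fun u => by simp
  let Q := rightCoeffsMulFirstOrder D a c P
  refine ⟨Q.support, Q, fun _ => Finsupp.notMem_support_iff.mp, ?_,
    rightCoeffsMulFirstOrder_apply_zero D a c P⟩
  rw [← hP, ofRightCoeffs_mul_firstOrder hD, ofRightCoeffs_apply, Finsupp.sum]

end Derivations

theorem commute_pderiv {σ k : Type*} [CommSemiring k] (i j : σ) :
    Commute (pderiv i : Derivation k (MvPolynomial σ k) _).toLinearMap (pderiv j).toLinearMap := by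
  classical
  obtain rfl | hij := eq_or_ne i j
  · exact .refl _
  ext p m
  simp [coeff_pderiv, hij, hij.symm, add_right_comm, mul_right_comm]

/-- Right constant term of a product with a first-order operator: if `P` has right
normal form `Σ_u ∂^u ∘ μ_{P_u}` then `P ∘ (δ − μ_c)` has a right normal form whose
constant term is `−(Σ_i ∂_i(a_i))·P_0 − Σ_i a_i·∂_i(P_0) − c·P_0`. -/
theorem right_constant_term_mul_first_order
    (a : Fin n → MvPolynomial (Fin n) A) (c : MvPolynomial (Fin n) A)
    (δ : Module.End A (MvPolynomial (Fin n) A))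
    (hδ : δ = ∑ i : Fin n, mulOp A n (a i) * pdOp A n i)
    (s : Finset (Fin n → ℕ)) (Pcoef : (Fin n → ℕ) → MvPolynomial (Fin n) A)
    (hPsupp : ∀ u ∉ s, Pcoef u = 0)
    (P : Module.End A (MvPolynomial (Fin n) A))
    (hP : P = ∑ u ∈ s, partialPow A n u * mulOp A n (Pcoef u)) :
    ∃ (t : Finset (Fin n → ℕ)) (Qcoef : (Fin n → ℕ) → MvPolynomial (Fin n) A),
      (∀ u ∉ t, Qcoef u = 0) ∧
      P * (δ - mulOp A n c) = ∑ u ∈ t, partialPow A n u * mulOp A n (Qcoef u) ∧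
      Qcoef 0 = -(∑ i : Fin n, pderiv i (a i)) * Pcoef 0
          - (∑ i : Fin n, a i * pderiv i (Pcoef 0)) - c * Pcoef 0 := by
  subst hδ hP
  exact right_constant_term_mul_first_order_general commute_pderiv a c s Pcoef hPsupp

end RightConstantTerm
end
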